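/- Assume the vertex c is controllable. Then for every ℓ ∈ {0, …, d} and every value b ∈ B_ℓ^d = {b_{vℓ} : v ∈ D^d}, the vector field ∑_{v∈D^d : b_{vℓ}=b} ∂_{p_v} belongs to 𝓜. -/

import Mathlib

/-!
Write `x_v = q_c - q_v + δ_{cv}`, and for a tuple `g` of polynomials let
`P g = ∑_v g_v(x_v) ∂_{p_v}` (`polyField`). Up to elements of `𝓜`:

* `[∂_{q_c}, X₀]` is `P f̃` (`polyField_start_mem`), and bracketing `P g` with `∂_{q_c}` gives
  `P g'`, so all `P f̃^{(k)}` lie in `𝓜`;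
* for constants `h` with `P h ∈ 𝓜`, `[P h, X₀]` is `∑_v h_v ∂_{q_v}` (`qField_mem`), whose bracket
  with `P g` is `-P (h g')`;
* if moreover `P (h X) ∈ 𝓜`, then `[P (h X), X₀]` is the Euler type field
  `∑_v h_v (x_v ∂_{q_v} + p_v ∂_{p_v})` (`eulerField_mem`), whose bracket with `P g` is
  `-P (h (X g' + g))`.

The rest is algebra (`level_core`). Let `S` be the space of constant tuples `h` with `P h ∈ 𝓜`.
It contains the tuple `B` of `d`-th coefficients, which is supported exactly on `D^d`, and is
stable under multiplication by `B` (bracket with `P f̃^{(d-1)}`). By interpolation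
(`mul_comp_mem`) it is stable under multiplication by every function of `B`; in particular the
indicator of `D^d` is in `S`. For `d = 1` this is already enough, since adjustedness makes the
zeroth coefficients vanish. For `d ≥ 2`, adjustedness makes `f̃^{(d-1)}` equal to `B X` on `D^d`,
whence `P (h X) ∈ 𝓜` for all `h ∈ S` supported on `D^d`. The Euler operator attached to `D^d` acts
on `X^j` by `j + 1` on `D^d` and by `0` elsewhere, so interpolating in its eigenvalues extracts the
constant terms of the `f̃^{(ℓ)}`: the `ℓ`-th coefficients restricted to `D^d` lie in `S`. Finally
`S` is stable under multiplication by them, and interpolation yields the indicators of their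
level sets.
-/

open scoped Classical
open Polynomial

noncomputable section

/-- Phase space ℝ^{2|V|}: positions `q = x.1` and momenta `p = x.2`. -/
abbrev Phase (V : Type) := (V → ℝ) × (V → ℝ)

/-- Lie bracket of vector fields: `[Y,Z](x) = DZ(x)·Y(x) − DY(x)·Z(x)`. -/
def lieB {V : Type} [Fintype V] (Y Z : Phase V → Phase V) : Phase V → Phase V :=
  fun x => fderiv ℝ Z x (Y x) - fderiv ℝ Y x (Z x)

/-- The constant vector field `∂_{p_v}`. -/
def dp {V : Type} [Fintype V] [DecidableEq V] (v : V) : Phase V → Phase V :=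
  fun _ => (0, Pi.single v 1)

/-- The constant vector field `∂_{q_v}`. -/
def dq {V : Type} [Fintype V] [DecidableEq V] (v : V) : Phase V → Phase V :=
  fun _ => (Pi.single v 1, 0)

/-- The constant vector field `∑_{v ∈ A} ∂_{p_v}`. -/
def dpSum {V : Type} [Fintype V] [DecidableEq V] (A : Finset V) : Phase V → Phase V :=
  fun _ => (0, ∑ v ∈ A, Pi.single v 1)

/-- The constant vector field `∑_{v ∈ A} ∂_{q_v}`. -/
def dqSum {V : Type} [Fintype V] [DecidableEq V] (A : Finset V) : Phase V → Phase V :=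
  fun _ => (∑ v ∈ A, Pi.single v 1, 0)

/-- The drift vector field
`X₀ = −∑_{v∈V*} γ_v p_v ∂_{p_v} + ∑_{v∈V} (p_v ∂_{q_v} − U_v'(q_v) ∂_{p_v})
      − ∑_{{u,v}∈E} V_{uv}'(q_u − q_v)(∂_{p_u} − ∂_{p_v})`,
written componentwise (using the symmetry `V_{vu}(x) = V_{uv}(−x)` of the
interaction potentials, the `∂_{p_v}`-component of the edge term at a vertex `v` is
`−∑_{w ~ v} V_{vw}'(q_v − q_w)`). -/
def X0 {V : Type} [Fintype V] [DecidableEq V] (G : SimpleGraph V) [DecidableRel G.Adj]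
    (γ : V → ℝ) (U : V → ℝ → ℝ) (Vp : V → V → Polynomial ℝ) : Phase V → Phase V :=
  fun x =>
    (x.2, fun v =>
      -(γ v) * x.2 v - deriv (U v) (x.1 v) -
        ∑ w ∈ Finset.univ.filter (fun w => G.Adj v w),
          (derivative (Vp v w)).eval (x.1 v - x.1 w))

/-- The smallest collection `𝓜` of vector fields on `ℝ^{2|V|}` that contains `∂_{p_v}`
for every `v ∈ V*`, and is closed under linear combinations, Lie brackets,
bracketing with `X₀`, and multiplication by smooth scalar functions. -/
inductive MM {V : Type} [Fintype V] [DecidableEq V] (Vstar : Finset V)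
    (X₀ : Phase V → Phase V) : (Phase V → Phase V) → Prop
  | basic (v : V) (hv : v ∈ Vstar) : MM Vstar X₀ (dp v)
  | add {Y Z : Phase V → Phase V} : MM Vstar X₀ Y → MM Vstar X₀ Z → MM Vstar X₀ (Y + Z)
  | smul (a : ℝ) {Y : Phase V → Phase V} : MM Vstar X₀ Y → MM Vstar X₀ (a • Y)
  | lie {Y Z : Phase V → Phase V} : MM Vstar X₀ Y → MM Vstar X₀ Z → MM Vstar X₀ (lieB Y Z)
  | lieX {Y : Phase V → Phase V} : MM Vstar X₀ Y → MM Vstar X₀ (lieB Y X₀)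
  | mulS (f : Phase V → ℝ) (hf : ContDiff ℝ (⊤ : ℕ∞) f) {Y : Phase V → Phase V} :
      MM Vstar X₀ Y → MM Vstar X₀ (fun x => f x • Y x)

/-- A vertex `v` is controllable if `∂_{q_v} ∈ 𝓜` and `∂_{p_v} ∈ 𝓜`. -/
def Controllable {V : Type} [Fintype V] [DecidableEq V] (Vstar : Finset V)
    (X₀ : Phase V → Phase V) (v : V) : Prop :=
  MM Vstar X₀ (dq v) ∧ MM Vstar X₀ (dp v)

/-- Two polynomials are equivalent if `f(·) = g(· + δ)` for some `δ ∈ ℝ`. -/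
def PolyEquiv (f g : Polynomial ℝ) : Prop :=
  ∃ δ : ℝ, ∀ x : ℝ, f.eval x = g.eval (x + δ)

/-- The set 𝒯 of neighbors ("targets") of a vertex `c`. -/
def Tset {V : Type} [Fintype V] [DecidableEq V] (G : SimpleGraph V) [DecidableRel G.Adj]
    (c : V) : Finset V :=
  Finset.univ.filter fun w => G.Adj c w

/-- The shift making a polynomial `g = ∑ a_i t^i/i!` of degree `k` adjusted
(i.e. killing the coefficient `a_{k−1}`), namely `a_{k−1}/a_k = coeff_{k−1}/(k·coeff_k)`. -/
def adjShift (g : Polynomial ℝ) : ℝ :=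
  g.coeff (g.natDegree - 1) / ((g.natDegree : ℝ) * g.leadingCoeff)

/-- The adjusted representation `g̃(·) = g(· − a_{k−1}/a_k)` of a polynomial `g`. -/
def adjRep (g : Polynomial ℝ) : Polynomial ℝ :=
  g.comp (Polynomial.X - Polynomial.C (adjShift g))

/-- `f̃_v`, the adjusted representation of `V''_{cv}`. -/
def ft {V : Type} (Vp : V → V → Polynomial ℝ) (c v : V) : Polynomial ℝ :=
  adjRep (derivative (derivative (Vp c v)))

/-- `d = max_{v∈𝒯} d_v`, the maximal degree of the adjusted polynomials `f̃_v`, `v ∈ 𝒯`. -/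
def dmax {V : Type} [Fintype V] [DecidableEq V] (G : SimpleGraph V) [DecidableRel G.Adj]
    (Vp : V → V → Polynomial ℝ) (c : V) : ℕ :=
  (Tset G c).sup fun v => (ft Vp c v).natDegree

/-- `D^d = {v ∈ 𝒯 : d_v = d}`, the neighbors of `c` of maximal adjusted degree. -/
def Dd {V : Type} [Fintype V] [DecidableEq V] (G : SimpleGraph V) [DecidableRel G.Adj]
    (Vp : V → V → Polynomial ℝ) (c : V) : Finset V :=
  (Tset G c).filter fun v => (ft Vp c v).natDegree = dmax G Vp c

/-- The coefficient `b_{vℓ}` in `f̃_v(x) = ∑_j b_{vj} x^j/j!`, i.e. `b_{vℓ} = ℓ!·coeff_ℓ(f̃_v)`. -/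
def bcoef {V : Type} (Vp : V → V → Polynomial ℝ) (c v : V) (ℓ : ℕ) : ℝ :=
  (Nat.factorial ℓ : ℝ) * (ft Vp c v).coeff ℓ

/-- The scalar function `x_v = q_c − q_v + δ_{cv}`, with `δ_{cv}` the adjusting shift
of `V''_{cv}`. -/
def xv {V : Type} [Fintype V] (Vp : V → V → Polynomial ℝ) (c v : V) : Phase V → ℝ :=
  fun x => x.1 c - x.1 v + adjShift (derivative (derivative (Vp c v)))

/-! ### Interpolation and the algebraic core -/

/-- If a subspace of functions is stable under multiplication by `b`, its finitely supported
members may be multiplied by any function of `b`: on the finitely many values of `b` on the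
support, every function agrees with a polynomial. -/
lemma mul_comp_mem {ι : Type*} (S : Submodule ℝ (ι → ℝ)) (b : ι → ℝ)
    (hb : ∀ h ∈ S, h * b ∈ S) (F : ℝ → ℝ) (h : ι → ℝ) (hh : h ∈ S)
    (hfin : (Function.support h).Finite) : h * (F ∘ b) ∈ S := by
  have key : ∀ φ : ℝ[X], h * (fun i => φ.eval (b i)) ∈ S := by
    intro φ
    induction φ using Polynomial.induction_on with
    | C a =>
      have : h * (fun i => (C a : ℝ[X]).eval (b i)) = a • h := by
        ext i; simp [mul_comm]
      rw [this]; exact S.smul_mem _ hh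
    | add p q hp hq =>
      have : h * (fun i => (p + q).eval (b i))
          = h * (fun i => p.eval (b i)) + h * (fun i => q.eval (b i)) := by
        ext i; simp [mul_add]
      rw [this]; exact S.add_mem hp hq
    | monomial n a hn =>
      have : h * (fun i => (C a * X ^ (n + 1) : ℝ[X]).eval (b i))
          = (h * (fun i => (C a * X ^ n : ℝ[X]).eval (b i))) * b := by
        ext i; simp [pow_succ]; ring
      rw [this]; exact hb _ hn
  have hfin' := hfin.image b
  have := key (Lagrange.interpolate hfin'.toFinset id F)
  convert this using 1
  ext i
  by_cases hi : h i = 0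
  · simp [hi]
  · have h1 : b i ∈ hfin'.toFinset := by
      simp only [Set.Finite.mem_toFinset]
      exact ⟨i, hi, rfl⟩
    have := Lagrange.eval_interpolate_at_node (r := F) (v := (id : ℝ → ℝ))
      (Function.injective_id.injOn) h1
    simp only [id] at this
    simp only [Pi.mul_apply, Function.comp, this]

/-- The algebraic core. The subspace `N` stands for the tuples `g` of polynomials with
`∑_v g_v(x_v) ∂_{p_v} ∈ 𝓜`; `hder`, `hcon`, `heul` encode bracketing with `∂_{q_c}`, with
`∑_v h_v ∂_{q_v}`, and with the Euler type field `∑_v h_v (x_v ∂_{q_v} + p_v ∂_{p_v})`. -/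
lemma level_core {V : Type} [Fintype V] (N : Submodule ℝ (V → ℝ[X]))
    (hder : ∀ g ∈ N, (fun v => derivative (g v)) ∈ N)
    (hcon : ∀ h : V → ℝ, (fun v => C (h v)) ∈ N → ∀ g ∈ N,
      (fun v => C (h v) * derivative (g v)) ∈ N)
    (heul : ∀ h : V → ℝ, (fun v => C (h v)) ∈ N → (fun v => C (h v) * X) ∈ N → ∀ g ∈ N,
      (fun v => C (h v) * (X * derivative (g v) + g v)) ∈ N)
    (f : V → ℝ[X]) (hf : f ∈ N) (d : ℕ) (hd : 1 ≤ d) (hfd : ∀ v, (f v).natDegree ≤ d)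
    (hadj : ∀ v, (f v).natDegree = d → (f v).coeff (d - 1) = 0)
    (ℓ : ℕ) (hℓ : ℓ ≤ d) (b : ℝ) :
    (fun v => C (if (f v).natDegree = d ∧ (ℓ.factorial : ℝ) * (f v).coeff ℓ = b
      then (1 : ℝ) else 0)) ∈ N := by
  -- `S`: the constant tuples in `N`
  let cm : (V → ℝ) →ₗ[ℝ] (V → ℝ[X]) :=
    { toFun := fun h v => C (h v)
      map_add' := by intro x y; ext1 v; simp
      map_smul' := by intro a y; ext1 v; simp [smul_eq_C_mul] }
  set S : Submodule ℝ (V → ℝ) := N.comap cm with hS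
  have memS : ∀ h : V → ℝ, h ∈ S ↔ (fun v => C (h v)) ∈ N := fun h => Iff.rfl
  -- iterated derivatives
  let Y : ℕ → V → ℝ[X] := fun k v => derivative^[k] (f v)
  have hY : ∀ k, Y k ∈ N := by
    intro k
    induction k with
    | zero => exact hf
    | succ k ih =>
      have := hder _ ih
      convert this using 1
      ext1 v
      simp only [Y, Function.iterate_succ_apply']
  have hY' : ∀ k v, derivative (Y k v) = Y (k + 1) v := by
    intro k v; simp only [Y, Function.iterate_succ_apply']
  have hYc : ∀ k v j, (Y k v).coeff j = ((j + k).descFactorial k : ℝ) * (f v).coeff (j + k) := by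
    intro k v j; simp [Y, coeff_iterate_derivative]
  set B : V → ℝ := fun v => (d.factorial : ℝ) * (f v).coeff d with hB
  have hB0 : ∀ v, (f v).natDegree ≠ d → B v = 0 := by
    intro v hv
    simp [B, coeff_eq_zero_of_natDegree_lt (lt_of_le_of_ne (hfd v) hv)]
  have hB1 : ∀ v, (f v).natDegree = d → B v ≠ 0 := by
    intro v hv
    have h1 : f v ≠ 0 := by
      rintro h0; rw [h0] at hv; simp at hv; omega
    have : (f v).coeff d ≠ 0 := by
      rw [← hv]; exact leadingCoeff_ne_zero.mpr h1
    simp [B, Nat.factorial_ne_zero, this]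
  have hYd : ∀ v, Y d v = C (B v) := by
    intro v
    ext j
    rw [hYc, coeff_C]
    split_ifs with hj
    · subst hj; simp [B, Nat.descFactorial_self]
    · rw [coeff_eq_zero_of_natDegree_lt (lt_of_le_of_lt (hfd v) (by omega)), mul_zero]
  have hBS : B ∈ S := by
    rw [memS]; convert hY d using 1; ext1 v; rw [hYd]
  have hmulB : ∀ h ∈ S, h * B ∈ S := by
    intro h hh
    have := hcon h hh (Y (d - 1)) (hY _)
    rw [memS]
    convert this using 1
    ext1 v
    rw [hY', Nat.sub_add_cancel hd, hYd]; simp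
  have finS : ∀ h : V → ℝ, (Function.support h).Finite := fun h => Set.toFinite _
  let one : V → ℝ := fun v => if (f v).natDegree = d then 1 else 0
  have hone : one ∈ S := by
    have := mul_comp_mem S B hmulB (fun t => t⁻¹) B hBS (finS _)
    convert this using 1
    ext v
    by_cases hv : (f v).natDegree = d
    · simp [one, hv, hB1 v hv]
    · simp [one, hv, hB0 v hv]
  -- multiplication by the `ℓ`-th coefficient preserves `S`
  let β : V → ℝ := fun v => one v * ((ℓ.factorial : ℝ) * (f v).coeff ℓ)
  suffices hβ : ∀ h ∈ S, h * β ∈ S by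
    have := mul_comp_mem S β hβ (fun t => if t = b then 1 else 0) one hone (finS _)
    rw [memS] at this
    convert this using 1
    ext1 v
    by_cases hv : (f v).natDegree = d
    · simp [β, one, hv]
    · simp [one, hv]
  rcases hd.eq_or_lt with h1 | h2
  · -- `d = 1`: the constant coefficients vanish and the leading ones are `B`
    intro h hh
    obtain rfl | rfl : ℓ = 0 ∨ ℓ = d := by omega
    · convert S.zero_mem using 1
      ext v
      by_cases hv : (f v).natDegree = d
      · have := hadj v hv
        simp only [← h1, Nat.sub_self] at this
        simp [β, this]
      · simp [β, one, hv]
    · convert hmulB h hh using 1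
      ext v
      by_cases hv : (f v).natDegree = ℓ
      · simp [β, one, hv, B]
      · simp [β, one, hv, hB0 v hv]
  -- the adjustment makes the `(d-1)`-st derivative a pure multiple of `X` on `D^d`
  have hYd1 : ∀ v, (f v).natDegree = d → Y (d - 1) v = C (B v) * X := by
    intro v hv
    ext j
    rw [hYc, coeff_C_mul, coeff_X]
    rcases Nat.lt_trichotomy j 1 with hj | hj | hj
    · obtain rfl : j = 0 := by omega
      simp [hadj v hv]
    · subst hj
      have e : 1 + (d - 1) = d := by omega
      have e2 : d.descFactorial (d - 1) = d.factorial := by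
        have := Nat.factorial_mul_descFactorial (n := d) (k := d - 1) (by omega)
        rw [show d - (d - 1) = 1 by omega] at this
        simpa using this
      simp [e, e2, B]
    · rw [coeff_eq_zero_of_natDegree_lt (lt_of_le_of_lt (hfd v) (by omega)), if_neg (by omega)]
      simp
  have hlin : ∀ h ∈ S, (fun v => C (h v * one v) * X) ∈ N := by
    intro h hh
    have h3 := mul_comp_mem S B hmulB (fun t => t⁻¹) h hh (finS _)
    have := hcon _ h3 (Y (d - 2)) (hY _)
    convert this using 1
    ext1 v
    rw [hY', show d - 2 + 1 = d - 1 by omega]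
    by_cases hv : (f v).natDegree = d
    · rw [hYd1 v hv, ← mul_assoc, ← C_mul]
      simp [one, hv, hB1 v hv]
    · simp [one, hv, hB0 v hv]
  have honeX : (fun v => C (one v) * X) ∈ N := by
    convert hlin one hone using 1
    ext1 v
    by_cases hv : (f v).natDegree = d <;> simp [one, hv]
  -- the Euler operator acts on `X ^ j` as multiplication by `j + 1`: constant terms split off
  let K : (V → ℝ[X]) →ₗ[ℝ] (V × ℕ → ℝ) :=
    { toFun := fun g i => (g i.1).coeff i.2
      map_add' := by intro x y; ext i; simp
      map_smul' := by intro a y; ext i; simp }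
  have hconst : ∀ g ∈ N, (fun v => one v * (g v).coeff 0) ∈ S := by
    intro g hg
    have := mul_comp_mem (N.map K) (fun i => one i.1 * ((i.2 : ℝ) + 1)) (by
      rintro _ ⟨g, hg, rfl⟩
      refine ⟨_, heul one hone honeX g hg, ?_⟩
      ext ⟨v, j⟩
      simp only [K, LinearMap.coe_mk, AddHom.coe_mk, Pi.mul_apply, coeff_C_mul, coeff_add]
      cases j with
      | zero => simp; ring
      | succ j => rw [coeff_X_mul, coeff_derivative]; push_cast; ring)
      (fun t => if t = 1 then 1 else 0) (K g) ⟨g, hg, rfl⟩ (by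
      have : (⋃ v : V, (fun j => (v, j)) '' ((g v).support : Set ℕ)).Finite :=
        Set.finite_iUnion fun v => (Finset.finite_toSet _).image _
      refine this.subset ?_
      rintro ⟨v, j⟩ hvj
      simp only [Set.mem_iUnion]
      exact ⟨v, j, by simpa [K] using hvj, rfl⟩)
    obtain ⟨g', hg', he⟩ := this
    rw [memS]
    suffices hgg : (fun v => C (one v * (g v).coeff 0)) = g' by rw [hgg]; exact hg'
    ext v j
    have := congrFun he (v, j)
    simp only [K, LinearMap.coe_mk, AddHom.coe_mk, Pi.mul_apply, Function.comp] at this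
    rw [this, coeff_C]
    by_cases hv : (f v).natDegree = d
    · by_cases hj : j = 0
      · simp [one, hv, hj]
      · simp [one, hv, hj]
    · simp [one, hv]
  have hβS : β ∈ S := by
    convert hconst _ (hY ℓ) using 1
    ext v
    simp [β, hYc, Nat.descFactorial_self]
  intro h hh
  have := hcon h hh _ (hlin β hβS)
  rw [memS]
  convert this using 1
  ext1 v
  by_cases hv : (f v).natDegree = d <;> simp [β, one, hv]

/-! ### Adjusted representations -/

lemma adjRep_eq_taylor (g : ℝ[X]) : adjRep g = taylor (-adjShift g) g := by
  simp [adjRep, taylor_apply, sub_eq_add_neg]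

lemma adjRep_natDegree (g : ℝ[X]) : (adjRep g).natDegree = g.natDegree := by
  rw [adjRep_eq_taylor, natDegree_taylor]

lemma adjRep_coeff (g : ℝ[X]) (hg : 1 ≤ g.natDegree) :
    (adjRep g).coeff (g.natDegree - 1) = 0 := by
  obtain ⟨k, hk⟩ : ∃ k, g.natDegree = k + 1 := ⟨g.natDegree - 1, by omega⟩
  have h0 : g.coeff (k + 1) ≠ 0 := by
    rw [← hk]; apply leadingCoeff_ne_zero.mpr; rintro rfl; simp at hg
  have hlin : hasseDeriv k g = C (g.coeff k) + C (((k : ℝ) + 1) * g.coeff (k + 1)) * X := by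
    ext j
    rw [hasseDeriv_coeff]
    rcases j with _ | _ | j
    · simp
    · simp [coeff_C, add_comm 1 k]
    · rw [coeff_eq_zero_of_natDegree_lt (by omega)]
      rw [coeff_add, coeff_C_mul, coeff_X, coeff_C]
      simp
  rw [adjRep_eq_taylor, taylor_coeff, hk, Nat.add_sub_cancel, hlin]
  simp only [adjShift, hk, Nat.add_sub_cancel, leadingCoeff]
  have : (k : ℝ) + 1 ≠ 0 := by positivity
  simp
  field_simp
  ring

/-! ### Vector fields in `𝓜` -/

/-- The field `∑_v g_v(x_v) ∂_{p_v}` attached to a tuple of polynomials. -/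
def polyField {V : Type} [Fintype V] (Vp : V → V → ℝ[X]) (c : V) (g : V → ℝ[X]) :
    Phase V → Phase V :=
  fun x => (0, fun v => (g v).eval (xv Vp c v x))

/-- The Euler type field `∑_v h_v (x_v ∂_{q_v} + p_v ∂_{p_v})`. -/
def eulerField {V : Type} [Fintype V] (Vp : V → V → ℝ[X]) (c : V) (h : V → ℝ) :
    Phase V → Phase V :=
  fun x => (fun v => h v * xv Vp c v x, fun v => h v * x.2 v)

lemma fderiv_apply_of_line {E F : Type*} [NormedAddCommGroup E] [NormedSpace ℝ E]
    [NormedAddCommGroup F] [NormedSpace ℝ F] {Z : E → F} {x w : E} {z : F}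
    (hZ : DifferentiableAt ℝ Z x) (h : HasDerivAt (fun t : ℝ => Z (x + t • w)) z 0) :
    fderiv ℝ Z x w = z := by
  have h1 := hZ.hasFDerivAt.hasLineDerivAt w
  exact HasDerivAt.unique h1 h

section fields

lemma hasDerivAt_q {V : Type} (x w : Phase V) (v : V) :
    HasDerivAt (fun t : ℝ => (x + t • w).1 v) (w.1 v) 0 := by
  simpa using ((hasDerivAt_id (0 : ℝ)).mul_const (w.1 v)).const_add (x.1 v)

lemma hasDerivAt_p {V : Type} (x w : Phase V) (v : V) :
    HasDerivAt (fun t : ℝ => (x + t • w).2 v) (w.2 v) 0 := by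
  simpa using ((hasDerivAt_id (0 : ℝ)).mul_const (w.2 v)).const_add (x.2 v)

variable {V : Type} [Fintype V] (Vp : V → V → ℝ[X]) (c : V)

lemma fderiv_dq [DecidableEq V] (x : Phase V) : fderiv ℝ (dq c) x = 0 :=
  fderiv_const_apply _

lemma contDiff_eval (P : ℝ[X]) {f : Phase V → ℝ} (hf : ContDiff ℝ (⊤ : ℕ∞) f) :
    ContDiff ℝ (⊤ : ℕ∞) (fun x => P.eval (f x)) := by
  have h := (P.contDiff_aeval (𝕜 := ℝ) (⊤ : ℕ∞)).comp hf
  simp only [coe_aeval_eq_eval] at h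
  exact h

lemma contDiff_q (v : V) : ContDiff ℝ (⊤ : ℕ∞) (fun x : Phase V => x.1 v) := by fun_prop

lemma contDiff_p (v : V) : ContDiff ℝ (⊤ : ℕ∞) (fun x : Phase V => x.2 v) := by fun_prop

lemma contDiff_xv (v : V) : ContDiff ℝ (⊤ : ℕ∞) (xv Vp c v) := by
  unfold xv; fun_prop

lemma differentiable_polyField (g : V → ℝ[X]) : Differentiable ℝ (polyField Vp c g) := by
  refine Differentiable.prodMk (differentiable_const _) (differentiable_pi.mpr fun v => ?_)
  exact (contDiff_eval _ (contDiff_xv Vp c v)).differentiable (by simp)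

lemma hasDerivAt_xv (x w : Phase V) (v : V) :
    HasDerivAt (fun t : ℝ => xv Vp c v (x + t • w)) (w.1 c - w.1 v) 0 := by
  exact ((hasDerivAt_q x w c).sub (hasDerivAt_q x w v)).add_const _

lemma hasDerivAt_eval (P : ℝ[X]) {f : ℝ → ℝ} {f' a t : ℝ} (hf : HasDerivAt f f' t)
    (ha : f t = a) : HasDerivAt (fun t => P.eval (f t)) ((derivative P).eval a * f') t := by
  subst ha
  exact (P.hasDerivAt (f t)).comp t hf

lemma fderiv_polyField (g : V → ℝ[X]) (x w : Phase V) :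
    fderiv ℝ (polyField Vp c g) x w
      = (0, fun v => (derivative (g v)).eval (xv Vp c v x) * (w.1 c - w.1 v)) := by
  refine fderiv_apply_of_line (differentiable_polyField Vp c g x) ?_
  refine HasDerivAt.prodMk (hasDerivAt_const _ _) (hasDerivAt_pi.mpr fun v => ?_)
  exact hasDerivAt_eval _ (hasDerivAt_xv Vp c x w v) (by simp)

lemma fderiv_eulerField (h : V → ℝ) (x w : Phase V) :
    fderiv ℝ (eulerField Vp c h) x w
      = (fun v => h v * (w.1 c - w.1 v), fun v => h v * w.2 v) := by
  refine fderiv_apply_of_line ?_ ?_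
  · refine Differentiable.prodMk (differentiable_pi.mpr fun v => ?_)
      (differentiable_pi.mpr fun v => ?_) x
    · exact (contDiff_const.mul (contDiff_xv Vp c v)).differentiable (n := (⊤ : ℕ∞)) (by simp)
    · exact (contDiff_const.mul (contDiff_p v)).differentiable (n := (⊤ : ℕ∞)) (by simp)
  · exact HasDerivAt.prodMk (hasDerivAt_pi.mpr fun v => (hasDerivAt_xv Vp c x w v).const_mul _)
      (hasDerivAt_pi.mpr fun v => (hasDerivAt_p x w v).const_mul _)

variable [DecidableEq V] (G : SimpleGraph V) [DecidableRel G.Adj] (γ : V → ℝ) (U : V → ℝ → ℝ)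

lemma contDiff_deriv {u : ℝ → ℝ} (hu : ContDiff ℝ (⊤ : ℕ∞) u) :
    ContDiff ℝ (⊤ : ℕ∞) (deriv u) :=
  (contDiff_infty_iff_deriv.mp hu).2

lemma fderiv_X0 (hU : ∀ v, ContDiff ℝ (⊤ : ℕ∞) (U v)) (x w : Phase V) :
    fderiv ℝ (X0 G γ U Vp) x w = (w.2, fun v =>
      -(γ v) * w.2 v - deriv (deriv (U v)) (x.1 v) * w.1 v -
        ∑ u ∈ Finset.univ.filter (fun u => G.Adj v u),
          (derivative (derivative (Vp v u))).eval (x.1 v - x.1 u) * (w.1 v - w.1 u)) := by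
  refine fderiv_apply_of_line ?_ ?_
  · refine Differentiable.prodMk differentiable_snd (differentiable_pi.mpr fun v => ?_) x
    refine ContDiff.differentiable (n := (⊤ : ℕ∞)) ?_ (by simp)
    refine ((contDiff_const.mul (contDiff_p v)).sub
      ((contDiff_deriv (hU v)).comp (contDiff_q v))).sub (ContDiff.sum fun u _ => ?_)
    exact contDiff_eval _ ((contDiff_q v).sub (contDiff_q u))
  · refine HasDerivAt.prodMk (hasDerivAt_pi.mpr fun v => hasDerivAt_p x w v)
      (hasDerivAt_pi.mpr fun v => ?_)
    refine (((hasDerivAt_p x w v).const_mul _).sub ?_).sub (HasDerivAt.fun_sum fun u _ => ?_)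
    · have h1 : HasDerivAt (deriv (U v)) (deriv (deriv (U v)) (x.1 v)) ((x + (0 : ℝ) • w).1 v) := by
        rw [zero_smul, add_zero]
        exact ((contDiff_deriv (hU v)).differentiable (by simp) _).hasDerivAt
      exact h1.comp (0 : ℝ) (hasDerivAt_q x w v)
    · exact hasDerivAt_eval _ ((hasDerivAt_q x w v).sub (hasDerivAt_q x w u)) (by simp)

end fields

/-- `𝓜` as a linear subspace; some member is supplied so that `0 ∈ 𝓜`. -/
def MMsub {V : Type} [Fintype V] [DecidableEq V] (Vstar : Finset V)
    (X₀ : Phase V → Phase V) (Z : Phase V → Phase V) (hZ : MM Vstar X₀ Z) :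
    Submodule ℝ (Phase V → Phase V) where
  carrier := {Y | MM Vstar X₀ Y}
  add_mem' := fun h1 h2 => MM.add h1 h2
  zero_mem' := by
    have := MM.smul 0 hZ
    rwa [zero_smul] at this
  smul_mem' := fun a _ h => MM.smul a h

section brackets

variable {V : Type} [Fintype V] [DecidableEq V] (G : SimpleGraph V) [DecidableRel G.Adj]
  (Vstar : Finset V) (γ : V → ℝ) (U : V → ℝ → ℝ) (Vp : V → V → ℝ[X]) (c : V)

/-- The friction part of a bracket with `X₀` lies in `𝓜`: it only involves `∂_{p_v}` with
`v ∈ V*`. -/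
lemma friction_mem (X₀ : Phase V → Phase V) (hγ0 : ∀ v ∉ Vstar, γ v = 0)
    (Z : Phase V → Phase V) (hZ : MM Vstar X₀ Z)
    (k : V → Phase V → ℝ) (hk : ∀ v, ContDiff ℝ (⊤ : ℕ∞) (k v)) :
    MM Vstar X₀ (fun x => (0, fun v => γ v * k v x)) := by
  have h1 : (∑ v ∈ Vstar, fun x : Phase V => (γ v * k v x) • dp v x) ∈ MMsub Vstar X₀ Z hZ :=
    Submodule.sum_mem _ fun v hv =>
      MM.mulS (fun x => γ v * k v x) (contDiff_const.mul (hk v)) (MM.basic v hv)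
  convert (show MM Vstar X₀ _ from h1) using 1
  ext x v
  · simp [dp, Finset.sum_apply, Prod.fst_sum]
  · simp only [Finset.sum_apply, Prod.snd_sum, dp, Prod.smul_snd, Pi.smul_apply, smul_eq_mul,
      Pi.single_apply, mul_ite, mul_one, mul_zero, Finset.sum_ite_eq]
    split_ifs with hv
    · rfl
    · rw [hγ0 v hv, zero_mul]

variable {G Vstar γ U Vp c}

lemma polyField_deriv_mem {X₀ : Phase V → Phase V} (hq : MM Vstar X₀ (dq c))
    {g : V → ℝ[X]} (hgc : g c = 0) (hg : MM Vstar X₀ (polyField Vp c g)) :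
    MM Vstar X₀ (polyField Vp c fun v => derivative (g v)) := by
  convert MM.lie hq hg using 1
  ext x v
  · simp [lieB, polyField, fderiv_polyField, fderiv_dq, dq]
  · simp only [lieB, fderiv_polyField, polyField, fderiv_dq, dq]
    by_cases hv : v = c
    · subst hv; simp [hgc]
    · simp [hv]

lemma qField_mem (hU : ∀ v, ContDiff ℝ (⊤ : ℕ∞) (U v)) (hγ0 : ∀ v ∉ Vstar, γ v = 0)
    {h : V → ℝ} (hh : MM Vstar (X0 G γ U Vp) (polyField Vp c fun v => C (h v))) :
    MM Vstar (X0 G γ U Vp) (fun _ => (h, 0)) := by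
  convert MM.add (MM.lieX hh) (friction_mem Vstar γ _ hγ0 _ hh (fun v _ => h v)
    (fun v => contDiff_const)) using 1
  ext x v
  · simp [lieB, fderiv_X0, hU, polyField, fderiv_polyField]
  · simp [lieB, fderiv_X0, hU, polyField, fderiv_polyField]

lemma polyField_mul_deriv_mem {X₀ : Phase V → Phase V} {h : V → ℝ} (hhc : h c = 0)
    (hh : MM Vstar X₀ (fun _ => (h, 0)))
    {g : V → ℝ[X]} (hg : MM Vstar X₀ (polyField Vp c g)) :
    MM Vstar X₀ (polyField Vp c fun v => C (h v) * derivative (g v)) := by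
  convert MM.smul (-1) (MM.lie hh hg) using 1
  ext x v
  · simp [lieB, polyField, fderiv_polyField]
  · simp [lieB, polyField, fderiv_polyField, hhc, mul_comm]

lemma eulerField_mem (hU : ∀ v, ContDiff ℝ (⊤ : ℕ∞) (U v)) (hγ0 : ∀ v ∉ Vstar, γ v = 0)
    {h : V → ℝ} (hh : MM Vstar (X0 G γ U Vp) (polyField Vp c fun v => C (h v)))
    (hX : MM Vstar (X0 G γ U Vp) (polyField Vp c fun v => C (h v) * X)) :
    MM Vstar (X0 G γ U Vp) (eulerField Vp c h) := by
  convert MM.add (MM.add (MM.lieX hX) (friction_mem Vstar γ _ hγ0 _ hh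
    (fun v x => h v * xv Vp c v x) (fun v => contDiff_const.mul (contDiff_xv Vp c v))))
    (MM.mulS (fun x => x.2 c) (contDiff_p c) hh) using 1
  ext x v
  · simp [lieB, fderiv_X0, hU, polyField, fderiv_polyField, eulerField]
  · simp [lieB, fderiv_X0, hU, polyField, fderiv_polyField, eulerField, X0]
    ring

lemma polyField_euler_mem {X₀ : Phase V → Phase V} {h : V → ℝ} (hhc : h c = 0)
    (hh : MM Vstar X₀ (eulerField Vp c h))
    {g : V → ℝ[X]} (hg : MM Vstar X₀ (polyField Vp c g)) :
    MM Vstar X₀ (polyField Vp c fun v => C (h v) * (X * derivative (g v) + g v)) := by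
  convert MM.smul (-1) (MM.lie hh hg) using 1
  ext x v
  · simp [lieB, polyField, fderiv_polyField, fderiv_eulerField]
  · simp [lieB, polyField, fderiv_polyField, fderiv_eulerField, eulerField, hhc]
    ring

/-- The `∂_{p_v}`, `v ≠ c`, components of `[∂_{q_c}, X₀]` are the `V''_{cv}(q_c - q_v)`; its
`∂_{p_c}` component is removed with a smooth multiple of `∂_{p_c} ∈ 𝓜`. -/
lemma polyField_start_mem (hU : ∀ v, ContDiff ℝ (⊤ : ℕ∞) (U v))
    (hsym : ∀ u v, G.Adj u v → ∀ x : ℝ, (Vp v u).eval x = (Vp u v).eval (-x))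
    (hc : Controllable Vstar (X0 G γ U Vp) c) :
    MM Vstar (X0 G γ U Vp)
      (polyField Vp c fun v => if v ∈ Tset G c then ft Vp c v else 0) := by
  have hsm : ContDiff ℝ (⊤ : ℕ∞) (fun x : Phase V => deriv (deriv (U c)) (x.1 c) +
      ∑ u ∈ Finset.univ.filter (fun u => G.Adj c u),
        (derivative (derivative (Vp c u))).eval (x.1 c - x.1 u)) := by
    refine ((contDiff_deriv (contDiff_deriv (hU c))).comp (contDiff_q c)).add
      (ContDiff.sum fun u _ => ?_)
    exact contDiff_eval _ ((contDiff_q c).sub (contDiff_q u))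
  convert MM.add (MM.lieX hc.1) (MM.mulS _ hsm hc.2) using 1
  ext x v
  · simp [lieB, polyField, fderiv_X0, hU, fderiv_dq, dq, dp]
  by_cases hv : v = c
  · subst hv
    have : ∑ u ∈ Finset.univ.filter (fun u => G.Adj v u),
        (derivative (derivative (Vp v u))).eval (x.1 v - x.1 u) *
          ((Pi.single v 1 : V → ℝ) v - (Pi.single v 1 : V → ℝ) u)
        = ∑ u ∈ Finset.univ.filter (fun u => G.Adj v u),
        (derivative (derivative (Vp v u))).eval (x.1 v - x.1 u) := by
      refine Finset.sum_congr rfl fun u hu => ?_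
      have : u ≠ v := by
        rintro rfl; simp at hu
      simp [this]
    simp only [lieB, polyField, fderiv_X0 _ _ _ _ hU, fderiv_dq, dq, dp, Pi.add_apply, Prod.snd_add,
      Prod.snd_sub, Pi.sub_apply, this]
    simp [Tset]
  · have : ∑ u ∈ Finset.univ.filter (fun u => G.Adj v u),
        (derivative (derivative (Vp v u))).eval (x.1 v - x.1 u) *
          ((Pi.single c 1 : V → ℝ) v - (Pi.single c 1 : V → ℝ) u)
        = if G.Adj v c then -(derivative (derivative (Vp v c))).eval (x.1 v - x.1 c) else 0 := by
      simp only [Pi.single_apply, hv, if_false, zero_sub, mul_neg, mul_ite, mul_one, mul_zero,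
        Finset.sum_neg_distrib, Finset.sum_ite_eq', Finset.mem_filter, Finset.mem_univ, true_and]
      split_ifs <;> simp
    simp only [lieB, polyField, fderiv_X0 _ _ _ _ hU, fderiv_dq, dq, dp, Pi.add_apply, Prod.snd_add,
      Prod.snd_sub, Pi.sub_apply, this]
    by_cases hA : G.Adj c v
    · have hcomp : Vp v c = (Vp c v).comp (-X) := by
        apply Polynomial.funext
        intro y
        simpa using hsym c v hA y
      have hd2 : derivative (derivative (Vp v c)) =
          (derivative (derivative (Vp c v))).comp (-X) := by
        rw [hcomp]; simp [derivative_comp]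
      simp [Tset, hA, hA.symm, hv, hd2, ft, adjRep, xv]
    · have hA' : ¬ G.Adj v c := fun h => hA h.symm
      simp [Tset, hA, hA', hv]

end brackets

/-- Lemma 4.11. Assume `c` is controllable. Then for every
`ℓ ∈ {0, …, d}` and every value `b ∈ B_ℓ^d = {b_{vℓ} : v ∈ D^d}` (i.e. `b = b_{v₀ℓ}`
for some `v₀ ∈ D^d`), the vector field `∑_{v∈D^d : b_{vℓ}=b} ∂_{p_v}` belongs to `𝓜`. -/
theorem coefficient_level_sets_mem
    {V : Type} [Fintype V] [DecidableEq V] (G : SimpleGraph V) [DecidableRel G.Adj]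
    (Vstar : Finset V) (γ : V → ℝ) (U : V → ℝ → ℝ) (Vp : V → V → Polynomial ℝ)
    (hγpos : ∀ v ∈ Vstar, 0 < γ v) (hγ0 : ∀ v ∉ Vstar, γ v = 0)
    (hU : ∀ v, ContDiff ℝ (⊤ : ℕ∞) (U v))
    (hsym : ∀ u v, G.Adj u v → ∀ x : ℝ, (Vp v u).eval x = (Vp u v).eval (-x))
    (hdeg : ∀ u v, G.Adj u v → 3 ≤ (Vp u v).natDegree)
    (c : V) (hc : Controllable Vstar (X0 G γ U Vp) c) :
    ∀ ℓ ≤ dmax G Vp c, ∀ v₀ ∈ Dd G Vp c,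
      MM Vstar (X0 G γ U Vp)
        (dpSum ((Dd G Vp c).filter fun v => bcoef Vp c v ℓ = bcoef Vp c v₀ ℓ)) := by
  intro ℓ hℓ v₀ hv₀
  set f : V → ℝ[X] := fun v => if v ∈ Tset G c then ft Vp c v else 0 with hfdef
  have hcT : c ∉ Tset G c := by simp [Tset]
  have hft : ∀ v ∈ Tset G c, 1 ≤ (ft Vp c v).natDegree := by
    intro v hv
    have h3 := hdeg c v (by simpa [Tset] using hv)
    rw [ft, adjRep_natDegree, natDegree_derivative, natDegree_derivative]
    omega
  have hle : ∀ v ∈ Tset G c, (ft Vp c v).natDegree ≤ dmax G Vp c := fun v hv =>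
    Finset.le_sup (f := fun v => (ft Vp c v).natDegree) hv
  have hd : 1 ≤ dmax G Vp c := by
    have hT := (Finset.mem_filter.mp hv₀).1
    exact (hft v₀ hT).trans (hle v₀ hT)
  have hfD : ∀ v, (f v).natDegree = dmax G Vp c ↔ v ∈ Dd G Vp c := by
    intro v
    by_cases hv : v ∈ Tset G c
    · simp [f, hv, Dd]
    · simp only [f, hv, Dd, if_false, natDegree_zero, Finset.mem_filter, false_and, iff_false]
      omega
  let N : Submodule ℝ (V → ℝ[X]) :=
    { carrier := {g | g c = 0 ∧ MM Vstar (X0 G γ U Vp) (polyField Vp c g)}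
      add_mem' := by
        rintro g g' ⟨h1, h2⟩ ⟨h3, h4⟩
        refine ⟨by simp [h1, h3], ?_⟩
        convert MM.add h2 h4 using 1
        ext x v <;> simp [polyField]
      zero_mem' := by
        refine ⟨rfl, ?_⟩
        convert MM.smul 0 hc.1 using 1
        ext x v <;> simp [polyField]
      smul_mem' := by
        rintro a g ⟨h1, h2⟩
        refine ⟨by simp [h1], ?_⟩
        convert MM.smul a h2 using 1
        ext x v <;> simp [polyField] }
  have key := level_core N
    (fun g hg => ⟨by simp [hg.1], polyField_deriv_mem hc.1 hg.1 hg.2⟩)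
    (fun h hh g hg => ⟨by simp [hg.1],
      polyField_mul_deriv_mem (C_eq_zero.mp hh.1) (qField_mem hU hγ0 hh.2) hg.2⟩)
    (fun h hh hX g hg => ⟨by simp [hg.1],
      polyField_euler_mem (C_eq_zero.mp hh.1) (eulerField_mem hU hγ0 hh.2 hX.2) hg.2⟩)
    f ⟨by simp [f, hcT], polyField_start_mem hU hsym hc⟩ (dmax G Vp c) hd
    (by
      intro v
      by_cases hv : v ∈ Tset G c
      · simpa [f, hv] using hle v hv
      · simp [f, hv])
    (by
      intro v hv
      have hD := (hfD v).mp hv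
      have hT := (Finset.mem_filter.mp hD).1
      have h1 := hft v hT
      simp only [f, hT, if_true] at hv ⊢
      rw [← hv]
      rw [ft, adjRep_natDegree] at h1 ⊢
      exact adjRep_coeff _ h1)
    ℓ hℓ (bcoef Vp c v₀ ℓ)
  convert key.2 using 1
  ext x v
  · simp [dpSum, polyField]
  · simp only [dpSum, polyField, eval_C, Finset.sum_apply, Pi.single_apply, Finset.sum_ite_eq,
      Finset.mem_filter, hfD]
    by_cases hv : v ∈ Dd G Vp c
    · have hT := (Finset.mem_filter.mp hv).1
      simp [hv, f, hT, bcoef]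
    · simp [hv]
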